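/- Let β > 0, μ ≥ 1 be real numbers, let s ∈ (0,1), let ℓ, j, k be natural numbers with 2ℓ ≤ j ≤ k, and let m ≥ 1 be a real number with (ℓ! : ℝ) ≤ √m. For 0 ≤ p ≤ k define M_{p,k} := s^{−((μ−1)/(2β))(1/(p+1) − 1/(k+1))} · (p!)^{1/(p+1)} / (k!)^{1/(k+1)}. Then ∑_{i=0}^{ℓ} binom(j,i) · M_{ℓ,k}^{(ℓ+1)(i+3/2)/(ℓ+3/2)} · M_{j−i,k}^{j−i+1} · ((k!)^{1/(k+1)} · m)^{(ℓ−i)/(2(ℓ+3/2))} ≤ (ℓ+1) · √m · j! · (k!)^{−(j+2)/(k+1)} · s^{−((μ−1)/(2β))·(2k−j)/(k+1)}. -/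

import Mathlib

/-!
With `θ = (i + 3/2) / (ℓ + 3/2)`, the exponents of the `i`-th summand are `(ℓ + 1) θ`, `j - i + 1`
and `(1 - θ) / 2`. The powers of `k!` then combine to exactly `-(j + 2) / (k + 1)`. The exponent
of `s` exceeds the claimed one by a nonnegative multiple of `1 - θ`, and `s ≤ 1`. What remains is
`binom(j, i) (j - i)! ≤ j!` and `(ℓ!) ^ θ * (√m) ^ (1 - θ) ≤ √m`, so each of the `ℓ + 1` summands
is at most the same bound.
-/

open scoped Nat

theorem choose_mul_factorial_sub_le_factorial (n i : ℕ) : n.choose i * (n - i)! ≤ n ! := by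
  rcases le_or_gt i n with hi | hi
  · rw [← Nat.choose_mul_factorial_mul_factorial hi]
    exact Nat.mul_le_mul_right _ (Nat.le_mul_of_pos_right _ i.factorial_pos)
  · simp [Nat.choose_eq_zero_of_lt hi]

theorem rpow_mul_rpow_one_sub_le {x y θ : ℝ} (hx : 0 ≤ x) (hy : 0 < y) (hxy : x ≤ y)
    (hθ : 0 ≤ θ) : x ^ θ * y ^ (1 - θ) ≤ y :=
  calc
    x ^ θ * y ^ (1 - θ) ≤ y ^ θ * y ^ (1 - θ) := by gcongr
    _ = y := by rw [← Real.rpow_add hy, add_sub_cancel, Real.rpow_one]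

/-- The exponent `θ = (i + 3/2) / (ℓ + 3/2)` with which the `i`-th summand interpolates between
`ℓ!` (weight `θ`) and `√m` (weight `1 - θ`). -/
noncomputable def interpExponent (ℓ i : ℕ) : ℝ := ((i : ℝ) + 3 / 2) / ((ℓ : ℝ) + 3 / 2)

theorem interpExponent_mul (ℓ i : ℕ) : interpExponent ℓ i * ((ℓ : ℝ) + 3 / 2) = i + 3 / 2 :=
  div_mul_cancel₀ _ (by positivity)

theorem interpExponent_nonneg (ℓ i : ℕ) : 0 ≤ interpExponent ℓ i := by
  unfold interpExponent
  positivity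

theorem interpExponent_le_one {ℓ i : ℕ} (h : i ≤ ℓ) : interpExponent ℓ i ≤ 1 := by
  unfold interpExponent
  exact div_le_one_of_le₀ (by gcongr) (by positivity)

theorem one_sub_interpExponent_div_two (ℓ i : ℕ) :
    (1 - interpExponent ℓ i) / 2 = ((ℓ : ℝ) - i) / (2 * ((ℓ : ℝ) + 3 / 2)) := by
  unfold interpExponent
  field_simp
  ring

/-- The time-dependent bridge coefficient `M_{p,k}` at `s = T* - t`; `a` stands for
`(μ - 1) / (2β)`. -/
noncomputable def bridgeCoeff (a s : ℝ) (k p : ℕ) : ℝ :=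
  s ^ (-a * (1 / ((p : ℝ) + 1) - 1 / ((k : ℝ) + 1))) * (p ! : ℝ) ^ ((1 : ℝ) / ((p : ℝ) + 1))
    / (k ! : ℝ) ^ ((1 : ℝ) / ((k : ℝ) + 1))

section

variable {a s : ℝ}

theorem bridgeCoeff_rpow (hs : 0 ≤ s) (k p : ℕ) (θ : ℝ) :
    bridgeCoeff a s k p ^ (((p : ℝ) + 1) * θ)
      = s ^ (-a * (θ * (1 - ((p : ℝ) + 1) / ((k : ℝ) + 1)))) * (p ! : ℝ) ^ θ
        * (k ! : ℝ) ^ (-(((p : ℝ) + 1) * θ / ((k : ℝ) + 1))) := by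
  have hp : ((p : ℝ) + 1) ≠ 0 := by positivity
  rw [bridgeCoeff, Real.div_rpow (by positivity) (by positivity),
    Real.mul_rpow (by positivity) (by positivity), ← Real.rpow_mul hs,
    ← Real.rpow_mul (by positivity), ← Real.rpow_mul (by positivity),
    Real.rpow_neg (by positivity), div_eq_mul_inv]
  congr 3 <;> field_simp

theorem bridgeCoeff_rpow_succ (hs : 0 ≤ s) (k p : ℕ) :
    bridgeCoeff a s k p ^ ((p : ℝ) + 1)
      = s ^ (-a * (1 - ((p : ℝ) + 1) / ((k : ℝ) + 1))) * (p ! : ℝ)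
        * (k ! : ℝ) ^ (-(((p : ℝ) + 1) / ((k : ℝ) + 1))) := by
  simpa only [mul_one, one_mul, Real.rpow_one] using bridgeCoeff_rpow hs k p 1

theorem bridge_summand_eq {m : ℝ} (hs : 0 < s) (hm : 0 ≤ m) (ℓ k : ℕ) {i j : ℕ} (hij : i ≤ j) :
    (j.choose i : ℝ) * bridgeCoeff a s k ℓ ^ (((ℓ : ℝ) + 1) * interpExponent ℓ i)
        * bridgeCoeff a s k (j - i) ^ (((j - i : ℕ) : ℝ) + 1)
        * ((k ! : ℝ) ^ ((1 : ℝ) / ((k : ℝ) + 1)) * m) ^ ((1 - interpExponent ℓ i) / 2)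
      = ((ℓ ! : ℝ) ^ interpExponent ℓ i * m ^ ((1 - interpExponent ℓ i) / 2))
        * ((j.choose i : ℝ) * ((j - i)! : ℝ)) * (k ! : ℝ) ^ (-(((j : ℝ) + 2) / ((k : ℝ) + 1)))
        * s ^ (-a * ((2 * (k : ℝ) - j) / ((k : ℝ) + 1)
          - (1 - interpExponent ℓ i) * (1 + 1 / (2 * ((k : ℝ) + 1))))) := by
  have hθ := interpExponent_mul ℓ i
  set θ := interpExponent ℓ i
  have hk : (0 : ℝ) < k ! := by positivity
  have factorial_exponent : -(((j : ℝ) + 2) / ((k : ℝ) + 1))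
      = -(((ℓ : ℝ) + 1) * θ / ((k : ℝ) + 1)) + -(((j : ℝ) - i + 1) / ((k : ℝ) + 1))
        + 1 / ((k : ℝ) + 1) * ((1 - θ) / 2) := by
    field_simp
    linarith
  have time_exponent : (2 * (k : ℝ) - j) / ((k : ℝ) + 1) - (1 - θ) * (1 + 1 / (2 * ((k : ℝ) + 1)))
      = θ * (1 - ((ℓ : ℝ) + 1) / ((k : ℝ) + 1)) + (1 - ((j : ℝ) - i + 1) / ((k : ℝ) + 1)) := by
    field_simp
    linarith
  rw [bridgeCoeff_rpow hs.le, bridgeCoeff_rpow_succ hs.le, Real.mul_rpow (by positivity) hm,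
    ← Real.rpow_mul hk.le, Nat.cast_sub hij, factorial_exponent, time_exponent, mul_add (-a),
    Real.rpow_add hs, Real.rpow_add hk, Real.rpow_add hk]
  ring

theorem bridge_summand_le {m : ℝ} (ha : 0 ≤ a) (hs : 0 < s) (hs1 : s ≤ 1) {ℓ i : ℕ} (hi : i ≤ ℓ)
    (hm : (ℓ ! : ℝ) ≤ √m) (j k : ℕ) :
    (j.choose i : ℝ) * bridgeCoeff a s k ℓ ^ (((ℓ : ℝ) + 1) * interpExponent ℓ i)
        * bridgeCoeff a s k (j - i) ^ (((j - i : ℕ) : ℝ) + 1)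
        * ((k ! : ℝ) ^ ((1 : ℝ) / ((k : ℝ) + 1)) * m) ^ ((1 - interpExponent ℓ i) / 2)
      ≤ √m * (j ! : ℝ) * (k ! : ℝ) ^ (-(((j : ℝ) + 2) / ((k : ℝ) + 1)))
        * s ^ (-a * ((2 * (k : ℝ) - j) / ((k : ℝ) + 1))) := by
  rcases lt_or_ge j i with hji | hij
  · rw [Nat.choose_eq_zero_of_lt hji, Nat.cast_zero, zero_mul, zero_mul, zero_mul]
    positivity
  have hsqrt : 0 < √m := lt_of_lt_of_le (by positivity) hm
  have hm0 : 0 ≤ m := (Real.sqrt_pos.mp hsqrt).le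
  have hθ : 0 ≤ 1 - interpExponent ℓ i := sub_nonneg.mpr (interpExponent_le_one hi)
  have interpolation :
      (ℓ ! : ℝ) ^ interpExponent ℓ i * m ^ ((1 - interpExponent ℓ i) / 2) ≤ √m := by
    rw [Real.rpow_div_two_eq_sqrt _ hm0]
    exact rpow_mul_rpow_one_sub_le (by positivity) hsqrt hm (interpExponent_nonneg ℓ i)
  have factorials : (j.choose i : ℝ) * ((j - i)! : ℝ) ≤ j ! :=
    mod_cast choose_mul_factorial_sub_le_factorial j i
  have time_factor :
      s ^ (-a * ((2 * (k : ℝ) - j) / ((k : ℝ) + 1)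
          - (1 - interpExponent ℓ i) * (1 + 1 / (2 * ((k : ℝ) + 1)))))
        ≤ s ^ (-a * ((2 * (k : ℝ) - j) / ((k : ℝ) + 1))) := by
    apply Real.rpow_le_rpow_of_exponent_ge hs hs1
    exact mul_le_mul_of_nonpos_left (sub_le_self _ (by positivity)) (neg_nonpos.mpr ha)
  rw [bridge_summand_eq hs hm0 ℓ k hij]
  gcongr

theorem stmt_11_general {m : ℝ} (ha : 0 ≤ a) (hs : 0 < s) (hs1 : s ≤ 1) {ℓ : ℕ}
    (hm : (ℓ ! : ℝ) ≤ √m) (j k : ℕ) :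
    ∑ i ∈ Finset.Icc 0 ℓ,
        (j.choose i : ℝ)
          * bridgeCoeff a s k ℓ ^ (((ℓ : ℝ) + 1) * ((i : ℝ) + 3 / 2) / ((ℓ : ℝ) + 3 / 2))
          * bridgeCoeff a s k (j - i) ^ (((j - i : ℕ) : ℝ) + 1)
          * ((k ! : ℝ) ^ ((1 : ℝ) / ((k : ℝ) + 1)) * m)
              ^ (((ℓ : ℝ) - i) / (2 * ((ℓ : ℝ) + 3 / 2)))
      ≤ ((ℓ : ℝ) + 1) * √m * (j ! : ℝ) * (k ! : ℝ) ^ (-(((j : ℝ) + 2) / ((k : ℝ) + 1)))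
        * s ^ (-a * ((2 * (k : ℝ) - j) / ((k : ℝ) + 1))) := by
  simp only [mul_div_assoc (_ + 1 : ℝ) (_ + 3 / 2), ← interpExponent.eq_def,
    ← one_sub_interpExponent_div_two]
  refine (Finset.sum_le_card_nsmul _ _ _ fun i hi ↦
    bridge_summand_le ha hs hs1 (Finset.mem_Icc.mp hi).2 hm j k).trans_eq ?_
  rw [Nat.card_Icc, tsub_zero, nsmul_eq_mul, Nat.cast_succ]
  simp only [mul_assoc]

end

/-- Verification of the second compatibility condition of the ascending-chain
theorem: with the time-weighted bridge coefficients
`M p = s^{−((μ−1)/(2β))(1/(p+1) − 1/(k+1))} · (p!)^{1/(p+1)} / (k!)^{1/(k+1)}`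
and `ℓ! ≤ √m`, the weighted sum is bounded by
`(ℓ+1) · √m · j! · (k!)^{−(j+2)/(k+1)} · s^{−((μ−1)/(2β))·(2k−j)/(k+1)}`. -/
theorem stmt_11 (β μ s : ℝ) (hβ : 0 < β) (hμ : 1 ≤ μ) (hs : s ∈ Set.Ioo (0 : ℝ) 1)
    (ℓ j k : ℕ) (hj : 2 * ℓ ≤ j) (hjk : j ≤ k)
    (m : ℝ) (hm : 1 ≤ m) (hfact : (Nat.factorial ℓ : ℝ) ≤ Real.sqrt m)
    (M : ℕ → ℝ)
    (hM : ∀ p : ℕ, p ≤ k → M p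
      = s ^ (-((μ - 1) / (2 * β)) * (1 / ((p : ℝ) + 1) - 1 / ((k : ℝ) + 1)))
          * (Nat.factorial p : ℝ) ^ ((1 : ℝ) / ((p : ℝ) + 1))
          / (Nat.factorial k : ℝ) ^ ((1 : ℝ) / ((k : ℝ) + 1))) :
    ∑ i ∈ Finset.Icc 0 ℓ,
        (j.choose i : ℝ)
          * (M ℓ) ^ (((ℓ : ℝ) + 1) * ((i : ℝ) + 3 / 2) / ((ℓ : ℝ) + 3 / 2))
          * (M (j - i)) ^ (((j - i : ℕ) : ℝ) + 1)
          * ((Nat.factorial k : ℝ) ^ ((1 : ℝ) / ((k : ℝ) + 1)) * m)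
              ^ (((ℓ : ℝ) - i) / (2 * ((ℓ : ℝ) + 3 / 2)))
      ≤ ((ℓ : ℝ) + 1) * Real.sqrt m * (Nat.factorial j : ℝ)
          * (Nat.factorial k : ℝ) ^ (-(((j : ℝ) + 2) / ((k : ℝ) + 1)))
          * s ^ (-((μ - 1) / (2 * β)) * ((2 * (k : ℝ) - j) / ((k : ℝ) + 1))) := by
  have ha : 0 ≤ (μ - 1) / (2 * β) := div_nonneg (sub_nonneg.mpr hμ) (by positivity)
  refine (Finset.sum_congr rfl fun i _ ↦ ?_).trans_le
    (stmt_11_general ha hs.1 hs.2.le hfact j k)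
  rw [hM ℓ (by lia), hM (j - i) (by lia), bridgeCoeff, bridgeCoeff]
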